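/- Let P(T,t,x) = (16x³t⁴+108t⁴−72xt³+8x²t²−2t+x) + (96x²t⁵−48x³t⁴−144t⁴+104xt³−16x²t²+2t−x)T + (48x⁴t⁶+192xt⁶−264x²t⁵+64x³t⁴+32t⁴−32xt³+9x²t²)T² + (192x³t⁷+128t⁷−96x⁴t⁶−192xt⁶+128x²t⁵−32x³t⁴)T³ + (48x⁵t⁸+192x²t⁸−192x³t⁷+56x⁴t⁶)T⁴ + (96x⁴t⁹−48x⁵t⁸)T⁵ + 16x⁶t¹⁰T⁶. Then the section series of Kreweras walks F(t;x,0) = Σ_{n≥0} (Σ_{i≥0} f(n;i,0) xⁱ) tⁿ satisfies P(F(t;x,0), t, x) = 0 as formal power series in x and t over ℚ. -/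

import Mathlib

/-!
The proof is guess-and-verify, made rigorous by a uniqueness property of the functional equation
of Kreweras walks.

Let `w = w(t)` be the power series with `w = t (2 + w³)` (`exists_w`) and `r = r(x)` the power
series in `x` over `ℚ⟦t⟧` with `2 r(x) = 1 + w² x r(x)²` (`exists_r`). Put `r = r(x)`, `s = r(y)` and
`Q = (2 + w³) r s (1 - w³ r s) / (r + s - 2 r s - w x y r s (1 - w³ r s))`; the denominator has
constant term `1/2`, so `Q` is a power series. Since `x` and `t` are rational functions of `w` and
`r`, a computation with rational functions (`kernel_identity`) gives
`x y Q = x y + t (x + y + x² y²) Q - t x g(x) - t y g(y)`, where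
`g(x) = (2 + w³) (r - w³ r² / 2)` is also the section `Q(x, 0)`.
As `g(x)` and `g(y)` each miss one variable, the coefficient of `tⁿ x^(i+1) y^(j+1)` of this
equation is the last-step recursion for the walk numbers (`f_succ`). That recursion determines
them (`eq_f_of_recursion`), so `Q` is the complete generating function and `g = F(t;x,0)`.
Finally, `P(g, t, x) = 0` is once more an identity of rational functions in `w` and `r`
(`section_identity`).

Series in `t`, in `t, x` and in `t, x, y` are modelled as `ℚ⟦X⟧`, `ℚ⟦X⟧⟦X⟧` and `ℚ⟦X⟧⟦X⟧⟦X⟧`; the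
two copies `r(x)` and `r(y)` are the images of `r` under `C` and under `map C`.
-/

noncomputable section

/-- The set of admissible steps for Kreweras walks. -/
def krewerasSteps : Set (ℤ × ℤ) := {(-1, 0), (0, -1), (1, 1)}

/-- The position of the walk `w` after its first `k` steps. -/
def walkPos {n : ℕ} (w : Fin n → ℤ × ℤ) (k : ℕ) : ℤ × ℤ :=
  ∑ m ∈ Finset.univ.filter (fun m : Fin n => (m : ℕ) < k), w m

/-- `w` is a Kreweras walk: every step is admissible and the walk (which starts
at the origin) never leaves the first quadrant. -/
def IsKrewerasWalk {n : ℕ} (w : Fin n → ℤ × ℤ) : Prop :=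
  (∀ m, w m ∈ krewerasSteps) ∧ ∀ k ≤ n, 0 ≤ (walkPos w k).1 ∧ 0 ≤ (walkPos w k).2

/-- The number of Kreweras walks of length `n` ending at `(i, j)`. -/
def f (n : ℕ) (i j : ℤ) : ℕ :=
  Nat.card {w : Fin n → ℤ × ℤ // IsKrewerasWalk w ∧ walkPos w n = (i, j)}

/-- The section `F(t;x,0)` of the complete generating function of Kreweras
walks, as a formal power series in the two variables `t = 0`, `x = 1`: the
coefficient of `t^n x^i` is `f(n;i,0)`. -/
def KrewerasGFx0 : MvPowerSeries (Fin 2) ℚ := fun e => (f (e 0) (e 1) 0 : ℚ)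

/-! ### Counting walks by their last step -/

/-- The walks of length `n` ending at `p`; `f n i j` is the cardinality of `walkSet n (i, j)`. -/
def walkSet (n : ℕ) (p : ℤ × ℤ) : Set (Fin n → ℤ × ℤ) :=
  {w | IsKrewerasWalk w ∧ walkPos w n = p}

lemma f_eq_ncard (n : ℕ) (i j : ℤ) : f n i j = (walkSet n (i, j)).ncard := rfl

lemma walkPos_snoc_of_le {n : ℕ} (w : Fin n → ℤ × ℤ) (s : ℤ × ℤ) {k : ℕ} (hk : k ≤ n) :
    walkPos (Fin.snoc w s : Fin (n + 1) → ℤ × ℤ) k = walkPos w k := by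
  simp only [walkPos, Finset.sum_filter, Fin.sum_univ_castSucc, Fin.snoc_castSucc, Fin.snoc_last,
    Fin.val_castSucc, Fin.val_last]
  simp [hk]

lemma walkPos_snoc_last {n : ℕ} (w : Fin n → ℤ × ℤ) (s : ℤ × ℤ) :
    walkPos (Fin.snoc w s : Fin (n + 1) → ℤ × ℤ) (n + 1) = walkPos w n + s := by
  simp only [walkPos, Finset.sum_filter, Fin.sum_univ_castSucc, Fin.snoc_castSucc, Fin.snoc_last,
    Fin.val_castSucc, Fin.val_last]
  congr 1
  · refine Finset.sum_congr rfl fun m _ => ?_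
    rw [if_pos (by omega), if_pos m.2]
  · simp

lemma finite_walkSet (n : ℕ) (p : ℤ × ℤ) : (walkSet n p).Finite := by
  have hs : krewerasSteps.Finite := by simp [krewerasSteps]
  exact (Set.Finite.pi' fun _ : Fin n => hs).subset fun w hw => hw.1.1

lemma walkSet_eq_empty {n : ℕ} {p : ℤ × ℤ} (hp : p.1 < 0 ∨ p.2 < 0) : walkSet n p = ∅ := by
  ext w
  simp only [walkSet, Set.mem_ofPred_eq, Set.mem_empty_iff_false, iff_false, not_and]
  rintro ⟨-, h⟩ rfl
  have := h n le_rfl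
  omega

lemma snoc_mem_walkSet {n : ℕ} {p : ℤ × ℤ} (hp : 0 ≤ p.1 ∧ 0 ≤ p.2) (w : Fin n → ℤ × ℤ)
    (s : ℤ × ℤ) : (Fin.snoc w s : Fin (n + 1) → ℤ × ℤ) ∈ walkSet (n + 1) p ↔
      s ∈ krewerasSteps ∧ w ∈ walkSet n (p - s) := by
  simp only [walkSet, Set.mem_ofPred_eq, IsKrewerasWalk, Fin.forall_fin_succ', Fin.snoc_castSucc,
    Fin.snoc_last, walkPos_snoc_last, eq_sub_iff_add_eq]
  constructor
  · rintro ⟨⟨⟨h1, h2⟩, h3⟩, h4⟩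
    refine ⟨h2, ⟨h1, fun k hk => ?_⟩, h4⟩
    rw [← walkPos_snoc_of_le w s hk]
    exact h3 k (by omega)
  · rintro ⟨h2, ⟨h1, h3⟩, h4⟩
    refine ⟨⟨⟨h1, h2⟩, fun k hk => ?_⟩, h4⟩
    rcases Nat.lt_or_ge n k with h | h
    · obtain rfl : k = n + 1 := by omega
      rw [walkPos_snoc_last, h4]
      exact hp
    · rw [walkPos_snoc_of_le w s h]
      exact h3 k h

lemma walkSet_succ (n : ℕ) {p : ℤ × ℤ} (hp : 0 ≤ p.1 ∧ 0 ≤ p.2) :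
    walkSet (n + 1) p =
      (fun w => (Fin.snoc w (-1, 0) : Fin (n + 1) → ℤ × ℤ)) '' walkSet n (p - (-1, 0)) ∪
      ((fun w => (Fin.snoc w (0, -1) : Fin (n + 1) → ℤ × ℤ)) '' walkSet n (p - (0, -1)) ∪
       (fun w => (Fin.snoc w (1, 1) : Fin (n + 1) → ℤ × ℤ)) '' walkSet n (p - (1, 1))) := by
  ext v
  obtain ⟨w, s, rfl⟩ : ∃ (w : Fin n → ℤ × ℤ) (s : ℤ × ℤ), v = Fin.snoc w s :=
    ⟨Fin.init v, v (Fin.last n), (Fin.snoc_init_self v).symm⟩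
  rw [snoc_mem_walkSet hp]
  simp only [Set.mem_union, Set.mem_image, Fin.snoc_inj, krewerasSteps, Set.mem_insert_iff,
    Set.mem_singleton_iff]
  constructor
  · rintro ⟨rfl | rfl | rfl, h⟩
    · exact Or.inl ⟨w, h, rfl, rfl⟩
    · exact Or.inr (Or.inl ⟨w, h, rfl, rfl⟩)
    · exact Or.inr (Or.inr ⟨w, h, rfl, rfl⟩)
  · rintro (⟨_, h, rfl, rfl⟩ | ⟨_, h, rfl, rfl⟩ | ⟨_, h, rfl, rfl⟩)
    · exact ⟨Or.inl rfl, h⟩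
    · exact ⟨Or.inr (Or.inl rfl), h⟩
    · exact ⟨Or.inr (Or.inr rfl), h⟩

lemma disjoint_image_snoc {n : ℕ} {s s' : ℤ × ℤ} (h : s ≠ s') (A B : Set (Fin n → ℤ × ℤ)) :
    Disjoint ((fun w => (Fin.snoc w s : Fin (n + 1) → ℤ × ℤ)) '' A)
      ((fun w => (Fin.snoc w s' : Fin (n + 1) → ℤ × ℤ)) '' B) := by
  rw [Set.disjoint_left]
  rintro _ ⟨a, -, rfl⟩ ⟨b, -, hb⟩
  exact h (Fin.snoc_inj.1 hb).2.symm

lemma ncard_image_snoc {n : ℕ} (s : ℤ × ℤ) (A : Set (Fin n → ℤ × ℤ)) :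
    ((fun w => (Fin.snoc w s : Fin (n + 1) → ℤ × ℤ)) '' A).ncard = A.ncard :=
  Set.ncard_image_of_injective _ fun _ _ h => (Fin.snoc_inj.1 h).1

lemma f_succ (n : ℕ) {i j : ℤ} (hi : 0 ≤ i) (hj : 0 ≤ j) :
    f (n + 1) i j = f n (i + 1) j + f n i (j + 1) + f n (i - 1) (j - 1) := by
  have hf (s : ℤ × ℤ) := (finite_walkSet n ((i, j) - s)).image
    fun w => (Fin.snoc w s : Fin (n + 1) → ℤ × ℤ)
  simp only [f_eq_ncard]
  rw [walkSet_succ n (p := (i, j)) ⟨hi, hj⟩,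
    Set.ncard_union_eq (Set.disjoint_union_right.2
      ⟨disjoint_image_snoc (by decide) _ _, disjoint_image_snoc (by decide) _ _⟩)
      (hf _) ((hf _).union (hf _)),
    Set.ncard_union_eq (disjoint_image_snoc (by decide) _ _) (hf _) (hf _)]
  simp only [ncard_image_snoc, Prod.mk_sub_mk, sub_neg_eq_add, sub_zero, add_assoc]

lemma f_of_neg {n : ℕ} {i j : ℤ} (h : i < 0 ∨ j < 0) : f n i j = 0 := by
  rw [f_eq_ncard, walkSet_eq_empty h, Set.ncard_empty]

lemma f_zero (i j : ℤ) : f 0 i j = if i = 0 ∧ j = 0 then 1 else 0 := by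
  rw [f_eq_ncard]
  have key : walkSet 0 (i, j) = {w | i = 0 ∧ j = 0} := by
    ext w
    simp [walkSet, IsKrewerasWalk, walkPos, Prod.ext_iff, eq_comm]
  rw [key]
  split_ifs with h <;> simp [h, Set.ncard_univ]

/-- The last-step recursion, for indices in `ℕ`, has only one solution. -/
lemma eq_f_of_recursion (q : ℕ → ℕ → ℕ → ℚ)
    (h0 : ∀ i j, q 0 i j = if i = 0 ∧ j = 0 then 1 else 0)
    (hs : ∀ n i j, q (n + 1) i j = q n (i + 1) j + q n i (j + 1) +
      if 0 < i ∧ 0 < j then q n (i - 1) (j - 1) else 0) (n i j : ℕ) :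
    q n i j = f n i j := by
  induction n generalizing i j with
  | zero => simp [h0, f_zero]
  | succ n ih =>
    rw [hs, f_succ n (Int.natCast_nonneg i) (Int.natCast_nonneg j), ih, ih]
    push_cast
    congr 1
    split_ifs with h
    · rw [ih, Nat.cast_sub h.1, Nat.cast_sub h.2, Nat.cast_one]
    · rw [f_of_neg (by omega), Nat.cast_zero]

/-! ### The two power series that parametrize the solution -/

open PowerSeries in
/-- The substitution `w = t / z` turns `w = t (2 + w³)` into the monic equation
`z³ - z² / 2 + t³ / 2 = 0`, which has `z = 1/2` as a simple root modulo `t`; Hensel's lemma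
applies. -/
lemma exists_w : ∃ w : PowerSeries ℚ, X * (2 + w ^ 3) = w := by
  let p : Polynomial (PowerSeries ℚ) := Polynomial.X ^ 3 +
    (Polynomial.C (-C (1 / 2)) * Polynomial.X ^ 2 + Polynomial.C (C (1 / 2) * X ^ 3))
  have hp : p.Monic := by
    refine Polynomial.monic_X_pow_add ?_
    compute_degree
    decide
  have h0 : p.eval (C (1 / 2)) ∈ Ideal.span {(X : PowerSeries ℚ)} := by
    rw [Ideal.mem_span_singleton]
    refine ⟨C (1 / 2) * X ^ 2, ?_⟩
    simp only [p, Polynomial.eval_add, Polynomial.eval_mul, Polynomial.eval_pow, Polynomial.eval_X,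
      Polynomial.eval_C]
    ring
  have h1 : IsUnit (Ideal.Quotient.mk (Ideal.span {(X : PowerSeries ℚ)})
      (p.derivative.eval (C (1 / 2)))) := by
    refine IsUnit.map _ ?_
    rw [PowerSeries.isUnit_iff_constantCoeff]
    simp [p, map_ofNat, Polynomial.derivative_pow]
    norm_num
  obtain ⟨z, hz, hz0⟩ := HenselianRing.is_henselian p hp _ h0 h1
  have hz1 : constantCoeff z = 1 / 2 := by
    rw [Ideal.mem_span_singleton, X_dvd_iff, map_sub, constantCoeff_C] at hz0
    linear_combination hz0
  have hu : z * z⁻¹ = 1 := PowerSeries.mul_inv_cancel z (by rw [hz1]; norm_num)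
  have hz2 : 2 * z ^ 3 + X ^ 3 = z ^ 2 := by
    have h2 : (2 : PowerSeries ℚ) * C (1 / 2) = 1 := by
      rw [← map_ofNat C 2, ← map_mul]; norm_num
    simp only [p, Polynomial.IsRoot.def, Polynomial.eval_add, Polynomial.eval_mul,
      Polynomial.eval_pow, Polynomial.eval_X, Polynomial.eval_C] at hz
    linear_combination 2 * hz - (X ^ 3 - z ^ 2) * h2
  refine ⟨X * z⁻¹, ?_⟩
  generalize z⁻¹ = v at hu
  have h3 : z ^ 3 * v ^ 3 = 1 := by rw [← mul_pow, hu, one_pow]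
  linear_combination (X * v ^ 3) * hz2 - 2 * X * h3 + X * v * (z * v + 1) * hu

open PowerSeries in
/-- `r = c(w² x / 4) / 2`, where `c` is the Catalan series. -/
lemma exists_r (w : PowerSeries ℚ) :
    ∃ r : PowerSeries (PowerSeries ℚ), 2 * r = 1 + C w ^ 2 * X * r ^ 2 := by
  let h : PowerSeries ℚ := C (1 / 2)
  have hh : 2 * h = 1 := by
    simp only [h]
    rw [← map_ofNat C 2, ← map_mul]; norm_num
  let c : PowerSeries (PowerSeries ℚ) :=
    rescale ((w * h) ^ 2) (map (Nat.castRingHom _) catalanSeries)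
  have hc : c ^ 2 * (C ((w * h) ^ 2) * X) + 1 = c := by
    have := congrArg (fun u => rescale ((w * h) ^ 2)
      (map (Nat.castRingHom (PowerSeries ℚ)) u)) catalanSeries_sq_mul_X_add_one
    simpa [c, rescale_X] using this
  have hh' : (2 : PowerSeries (PowerSeries ℚ)) * C h = 1 := by
    rw [← map_ofNat C 2, ← map_mul, hh, map_one]
  refine ⟨C h * c, ?_⟩
  rw [map_pow, map_mul] at hc
  linear_combination c * hh' - hc

/-! ### Identities between rational functions -/

/-- The kernel equation for the explicit rational expression `Q` in `w`, `r = r(x)`, `s = r(y)`. -/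
lemma kernel_identity_field {K : Type*} [Field K] [CharZero K] (w r s t x y Q g g' : K)
    (ht0 : t ≠ 0)
    (hD : r + s - 2 * (r * s) - w * x * y * (r * s) * (1 - w ^ 3 * (r * s)) ≠ 0)
    (ht : t * (2 + w ^ 3) = w) (hx : 2 * r = 1 + w ^ 2 * x * r ^ 2)
    (hy : 2 * s = 1 + w ^ 2 * y * s ^ 2)
    (hQ : (r + s - 2 * (r * s) - w * x * y * (r * s) * (1 - w ^ 3 * (r * s))) * Q
      = (2 + w ^ 3) * (r * s) * (1 - w ^ 3 * (r * s)))
    (hg : 2 * g = (2 + w ^ 3) * (2 * r - w ^ 3 * r ^ 2))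
    (hg' : 2 * g' = (2 + w ^ 3) * (2 * s - w ^ 3 * s ^ 2)) :
    x * y * Q = x * y + t * (x + y + x ^ 2 * y ^ 2) * Q - t * x * g - t * y * g' := by
  have hw : w ≠ 0 := by rintro rfl; simp [ht0] at ht
  have h2 : 2 + w ^ 3 ≠ 0 := by intro h; rw [h, mul_zero] at ht; exact hw ht.symm
  have hr : r ≠ 0 := by rintro rfl; simp at hx
  have hs : s ≠ 0 := by rintro rfl; simp at hy
  have key : (x * y - t * (x + y + x ^ 2 * y ^ 2)) *
      ((2 + w ^ 3) * (r * s) * (1 - w ^ 3 * (r * s))) = (x * y - t * x * g - t * y * g') *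
      (r + s - 2 * (r * s) - w * x * y * (r * s) * (1 - w ^ 3 * (r * s))) := by
    clear hQ hD
    obtain rfl : t = w / (2 + w ^ 3) := by field_simp; linear_combination ht
    obtain rfl : x = (2 * r - 1) / (w ^ 2 * r ^ 2) := by field_simp; linear_combination -hx
    obtain rfl : y = (2 * s - 1) / (w ^ 2 * s ^ 2) := by field_simp; linear_combination -hy
    obtain rfl : g = (2 + w ^ 3) * (2 * r - w ^ 3 * r ^ 2) / 2 := by
      field_simp; linear_combination hg
    obtain rfl : g' = (2 + w ^ 3) * (2 * s - w ^ 3 * s ^ 2) / 2 := by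
      field_simp; linear_combination hg'
    field_simp
    ring
  refine mul_right_cancel₀ hD ?_
  linear_combination key + (x * y - t * (x + y + x ^ 2 * y ^ 2)) * hQ

lemma kernel_identity {R : Type*} [CommRing R] [IsDomain R] [CharZero R]
    (w r s t x y Q g g' : R) (ht0 : t ≠ 0)
    (hD : r + s - 2 * (r * s) - w * x * y * (r * s) * (1 - w ^ 3 * (r * s)) ≠ 0)
    (ht : t * (2 + w ^ 3) = w) (hx : 2 * r = 1 + w ^ 2 * x * r ^ 2)
    (hy : 2 * s = 1 + w ^ 2 * y * s ^ 2)
    (hQ : (r + s - 2 * (r * s) - w * x * y * (r * s) * (1 - w ^ 3 * (r * s))) * Q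
      = (2 + w ^ 3) * (r * s) * (1 - w ^ 3 * (r * s)))
    (hg : 2 * g = (2 + w ^ 3) * (2 * r - w ^ 3 * r ^ 2))
    (hg' : 2 * g' = (2 + w ^ 3) * (2 * s - w ^ 3 * s ^ 2)) :
    x * y * Q = x * y + t * (x + y + x ^ 2 * y ^ 2) * Q - t * x * g - t * y * g' := by
  have hinj := FaithfulSMul.algebraMap_injective R (FractionRing R)
  have : CharZero (FractionRing R) := charZero_of_injective_algebraMap hinj
  set φ := algebraMap R (FractionRing R)
  apply hinj
  have := kernel_identity_field (φ w) (φ r) (φ s) (φ t) (φ x) (φ y) (φ Q) (φ g) (φ g')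
    (by rwa [Ne, map_eq_zero_iff φ hinj])
    (by rw [← map_ne_zero_iff φ hinj] at hD; simpa [map_ofNat] using hD)
    (by simpa [map_ofNat] using congrArg φ ht) (by simpa [map_ofNat] using congrArg φ hx)
    (by simpa [map_ofNat] using congrArg φ hy) (by simpa [map_ofNat] using congrArg φ hQ)
    (by simpa [map_ofNat] using congrArg φ hg) (by simpa [map_ofNat] using congrArg φ hg')
  simpa using this

/-- The annihilating polynomial `P(T, t, x)`. -/
def annihilator {R : Type*} [CommRing R] (T t x : R) : R :=
    (16 * x ^ 3 * t ^ 4 + 108 * t ^ 4 - 72 * x * t ^ 3 + 8 * x ^ 2 * t ^ 2 - 2 * t + x)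
      + (96 * x ^ 2 * t ^ 5 - 48 * x ^ 3 * t ^ 4 - 144 * t ^ 4 + 104 * x * t ^ 3
          - 16 * x ^ 2 * t ^ 2 + 2 * t - x) * T
      + (48 * x ^ 4 * t ^ 6 + 192 * x * t ^ 6 - 264 * x ^ 2 * t ^ 5 + 64 * x ^ 3 * t ^ 4
          + 32 * t ^ 4 - 32 * x * t ^ 3 + 9 * x ^ 2 * t ^ 2) * T ^ 2
      + (192 * x ^ 3 * t ^ 7 + 128 * t ^ 7 - 96 * x ^ 4 * t ^ 6 - 192 * x * t ^ 6
          + 128 * x ^ 2 * t ^ 5 - 32 * x ^ 3 * t ^ 4) * T ^ 3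
      + (48 * x ^ 5 * t ^ 8 + 192 * x ^ 2 * t ^ 8 - 192 * x ^ 3 * t ^ 7
          + 56 * x ^ 4 * t ^ 6) * T ^ 4
      + (96 * x ^ 4 * t ^ 9 - 48 * x ^ 5 * t ^ 8) * T ^ 5
      + 16 * x ^ 6 * t ^ 10 * T ^ 6

lemma map_annihilator {R S : Type*} [CommRing R] [CommRing S] (φ : R →+* S) (T t x : R) :
    φ (annihilator T t x) = annihilator (φ T) (φ t) (φ x) := by
  simp [annihilator, map_ofNat]

lemma section_identity_field {K : Type*} [Field K] [CharZero K] (w r t x g : K) (ht0 : t ≠ 0)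
    (ht : t * (2 + w ^ 3) = w) (hx : 2 * r = 1 + w ^ 2 * x * r ^ 2)
    (hg : 2 * g = (2 + w ^ 3) * (2 * r - w ^ 3 * r ^ 2)) :
    annihilator g t x = 0 := by
  have hw : w ≠ 0 := by rintro rfl; simp [ht0] at ht
  have h2 : 2 + w ^ 3 ≠ 0 := by intro h; rw [h, mul_zero] at ht; exact hw ht.symm
  have hr : r ≠ 0 := by rintro rfl; simp at hx
  obtain rfl : t = w / (2 + w ^ 3) := by field_simp; linear_combination ht
  obtain rfl : x = (2 * r - 1) / (w ^ 2 * r ^ 2) := by field_simp; linear_combination -hx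
  obtain rfl : g = (2 + w ^ 3) * (2 * r - w ^ 3 * r ^ 2) / 2 := by
    field_simp; linear_combination hg
  unfold annihilator
  field_simp
  ring

lemma section_identity {R : Type*} [CommRing R] [IsDomain R] [CharZero R] (w r t x g : R)
    (ht0 : t ≠ 0) (ht : t * (2 + w ^ 3) = w) (hx : 2 * r = 1 + w ^ 2 * x * r ^ 2)
    (hg : 2 * g = (2 + w ^ 3) * (2 * r - w ^ 3 * r ^ 2)) :
    annihilator g t x = 0 := by
  have hinj := FaithfulSMul.algebraMap_injective R (FractionRing R)
  have : CharZero (FractionRing R) := charZero_of_injective_algebraMap hinj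
  set φ := algebraMap R (FractionRing R)
  apply hinj
  rw [map_annihilator, map_zero]
  exact section_identity_field (φ w) (φ r) (φ t) (φ x) (φ g)
    (by rwa [Ne, map_eq_zero_iff φ hinj])
    (by simpa [map_ofNat] using congrArg φ ht) (by simpa [map_ofNat] using congrArg φ hx)
    (by simpa [map_ofNat] using congrArg φ hg)

/-! ### The complete generating function -/

open PowerSeries in
/-- Coefficient extraction from the kernel equation; `g` and `g'` are series in which `y`,
respectively `x`, does not occur. -/
lemma coeff_eq_f_of_kernel (Q : PowerSeries (PowerSeries (PowerSeries ℚ)))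
    (g g' : PowerSeries (PowerSeries ℚ))
    (h : C X * X * Q = C X * X + C (C X) * (C X + X + C X ^ 2 * X ^ 2) * Q
      - C (C X) * C X * C g - C (C X) * X * map C g') (n i j : ℕ) :
    coeff n (coeff i (coeff j Q)) = f n i j := by
  have key (n i j : ℕ) := congrArg (fun F => coeff n (coeff (i + 1) (coeff (j + 1) F))) h
  have e : C X * X + C (C X) * (C X + X + C X ^ 2 * X ^ 2) * Q
      - C (C X) * C X * C g - C (C X) * X * map C g' =
      X * C X + C (C X) * (C X * Q + X * Q + X * (C X * (X * (C X * Q))))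
      - C (C (X : PowerSeries ℚ) * X * g) - C (C X) * (X * map C g') := by
    simp only [map_mul]; ring
  have e' : C X * X * Q = X * (C X * Q) := by ring
  simp only [e, e', map_add, map_sub, coeff_succ_X_mul, coeff_C_mul] at key
  have hg (i j : ℕ) : coeff (i + 1) (coeff j (map (C (R := PowerSeries ℚ)) g')) = 0 := by
    rw [coeff_map, coeff_C, if_neg i.succ_ne_zero]
  have hg' (j : ℕ) : coeff (j + 1) (C (C (X : PowerSeries ℚ) * X * g)) = 0 := by
    rw [coeff_C, if_neg j.succ_ne_zero]
  have hX (i j : ℕ) : coeff (i + 1) (coeff j (C (X : PowerSeries (PowerSeries ℚ)))) =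
      if i = 0 ∧ j = 0 then 1 else 0 := by
    rw [coeff_C]
    by_cases hj : j = 0 <;> by_cases hi : i = 0 <;> simp [hi, hj, coeff_X]
  simp only [hg, hg', hX, mul_zero, map_zero, sub_zero] at key
  refine eq_f_of_recursion (fun n i j => coeff n (coeff i (coeff j Q))) (fun i j => ?_)
    (fun n i j => ?_) n i j
  · have := key 0 i j
    rw [coeff_zero_X_mul, add_zero] at this
    rw [this]
    split_ifs <;> simp
  · have := key (n + 1) i j
    rw [coeff_succ_X_mul] at this
    rw [this]
    have h1 : coeff (n + 1) (if i = 0 ∧ j = 0 then (1 : PowerSeries ℚ) else 0) = 0 := by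
      split_ifs <;> simp [coeff_one]
    rw [h1, zero_add, map_add, map_add, add_comm (coeff n (coeff i (coeff (j + 1) Q)))]
    congr 1
    rcases j with _ | j
    · simp
    · rcases i with _ | i
      · simp [coeff_succ_X_mul, coeff_C_mul]
      · simp [coeff_succ_X_mul, coeff_C_mul]

lemma charZero_powerSeries {R : Type*} [Semiring R] [CharZero R] : CharZero (PowerSeries R) :=
  charZero_of_injective_ringHom (f := PowerSeries.C (R := R)) PowerSeries.C_injective

open PowerSeries in
/-- The section `F(t;x,0)`, as a series in `ℚ⟦t⟧⟦x⟧`, is the constant coefficient in `y` of the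
solution `Q` of the kernel equation built from `w` and `r`. Here `W`, `C r` and `s` are `w`,
`r(t, x)` and `r(t, y)` in `ℚ⟦t⟧⟦x⟧⟦y⟧`. -/
lemma exists_section : ∃ g : PowerSeries (PowerSeries ℚ),
    (∀ n i, coeff n (coeff i g) = f n i 0) ∧ annihilator g (C X) X = 0 := by
  obtain ⟨w, hw⟩ := exists_w
  obtain ⟨r, hr⟩ := exists_r w
  let W : PowerSeries (PowerSeries (PowerSeries ℚ)) := C (C w)
  let s : PowerSeries (PowerSeries (PowerSeries ℚ)) := map C r
  have hs : 2 * s = 1 + W ^ 2 * X * s ^ 2 := by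
    simpa [W, s, map_ofNat] using congrArg (map (C (R := PowerSeries ℚ))) hr
  have hr' : 2 * C r = 1 + W ^ 2 * C X * C r ^ 2 := by
    simpa [W, map_ofNat] using congrArg (C (R := PowerSeries (PowerSeries ℚ))) hr
  have hw' : C w = C X * (2 + C w ^ 3) := by
    simpa [map_ofNat] using (congrArg (C (R := PowerSeries ℚ)) hw).symm
  have hW : W = C (C X) * (2 + W ^ 3) := by
    simpa [W, map_ofNat] using congrArg (C (R := PowerSeries (PowerSeries ℚ))) hw'
  have hr0 : 2 * constantCoeff r = 1 := by
    simpa [map_ofNat] using congrArg constantCoeff hr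
  have hs0 : 2 * constantCoeff s = 1 := by
    simpa [map_ofNat] using congrArg constantCoeff hs
  let D := C r + s - 2 * (C r * s) - W * C X * X * (C r * s) * (1 - W ^ 3 * (C r * s))
  have hD0 : constantCoeff D = constantCoeff s := by
    simp only [D, map_add, map_sub, map_mul, map_ofNat, constantCoeff_C, constantCoeff_X]
    linear_combination -r * hs0
  have hD : IsUnit D := by
    have h4 : IsUnit (constantCoeff s) := IsUnit.of_mul_eq_one_right _ hs0
    rwa [PowerSeries.isUnit_iff_constantCoeff, hD0]
  obtain ⟨Q, hQ⟩ : ∃ Q, D * Q = (2 + W ^ 3) * (C r * s) * (1 - W ^ 3 * (C r * s)) :=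
    hD.dvd.imp fun _ => Eq.symm
  have hQ0 : 2 * constantCoeff Q = (2 + C w ^ 3) * (2 * r - C w ^ 3 * r ^ 2) := by
    have h5 := congrArg constantCoeff hQ
    rw [map_mul, hD0] at h5
    simp only [W, map_add, map_sub, map_mul, map_pow, map_ofNat, map_one, constantCoeff_C] at h5
    linear_combination 4 * h5 - 2 * constantCoeff Q * hs0 +
      (2 + C w ^ 3) * r * (2 - C w ^ 3 * r * (2 * constantCoeff s + 1)) * hs0
  have hg : 2 * C (constantCoeff Q) = (2 + W ^ 3) * (2 * C r - W ^ 3 * C r ^ 2) := by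
    simpa [W, map_ofNat] using congrArg (C (R := PowerSeries (PowerSeries ℚ))) hQ0
  have hg' : 2 * map C (constantCoeff Q) = (2 + W ^ 3) * (2 * s - W ^ 3 * s ^ 2) := by
    simpa [W, s, map_ofNat] using congrArg (map (C (R := PowerSeries ℚ))) hQ0
  have hX0 : C (X : PowerSeries ℚ) ≠ 0 := by
    rw [Ne, map_eq_zero_iff _ C_injective]
    exact X_ne_zero
  have hX1 : C (C (X : PowerSeries ℚ)) ≠ 0 := by
    rwa [Ne, map_eq_zero_iff _ C_injective]
  have : CharZero (PowerSeries ℚ) := charZero_powerSeries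
  have : CharZero (PowerSeries (PowerSeries ℚ)) := charZero_powerSeries
  have : CharZero (PowerSeries (PowerSeries (PowerSeries ℚ))) := charZero_powerSeries
  have hker := kernel_identity W (C r) s (C (C X)) (C X) X Q _ _ hX1 hD.ne_zero hW.symm hr' hs hQ
    hg hg'
  refine ⟨constantCoeff Q, fun n i => ?_, section_identity (C w) r _ _ _ hX0 hw'.symm hr hQ0⟩
  rw [← coeff_zero_eq_constantCoeff_apply, coeff_eq_f_of_kernel Q _ _ hker, Nat.cast_zero]

/-! ### Two-variable series as iterated series -/

/-- The identification `ℚ⟦t, x⟧ ≃ ℚ⟦t⟧⟦x⟧`; the variable `x = X 1` becomes the outer one. -/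
def iterEquiv : MvPowerSeries (Fin 2) ℚ ≃ₐ[ℚ] PowerSeries (PowerSeries ℚ) :=
  (MvPowerSeries.renameEquiv ℚ ((Equiv.swap 0 1).trans ((finSuccEquiv 1).trans
    (Equiv.optionCongr (Equiv.ofUnique (Fin 1) Unit))))).trans
    (MvPowerSeries.optionEquivLeft Unit ℚ)

lemma iterEquiv_X_zero : iterEquiv (MvPowerSeries.X 0) = PowerSeries.C PowerSeries.X := by
  have : finSuccEquiv 1 1 = some 0 := rfl
  simp [iterEquiv, this]
  rfl

lemma iterEquiv_X_one : iterEquiv (MvPowerSeries.X 1) = PowerSeries.X := by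
  simp [iterEquiv]

lemma coeff_coeff_iterEquiv (p : MvPowerSeries (Fin 2) ℚ) (n i : ℕ) :
    PowerSeries.coeff n (PowerSeries.coeff i (iterEquiv p)) =
      MvPowerSeries.coeff (Finsupp.single 0 n + Finsupp.single 1 i) p := by
  let e : Fin 2 ≃ Option Unit := (Equiv.swap 0 1).trans ((finSuccEquiv 1).trans
    (Equiv.optionCongr (Equiv.ofUnique (Fin 1) Unit)))
  have he0 : e 0 = some () := rfl
  have he1 : e 1 = none := rfl
  have h : (Finsupp.single () n).optionElim i =
      Finsupp.embDomain e.toEmbedding (Finsupp.single 0 n + Finsupp.single 1 i) := by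
    rw [Finsupp.embDomain_eq_mapDomain, Finsupp.mapDomain_add, Finsupp.mapDomain_single,
      Finsupp.mapDomain_single, Equiv.coe_toEmbedding, he0, he1]
    ext a
    cases a <;> simp
  have h2 := MvPowerSeries.coeff_coeff_optionEquivLeft
    (MvPowerSeries.rename (e.toEmbedding : Fin 2 → Option Unit) p) i (Finsupp.single () n)
  rw [h, MvPowerSeries.coeff_embDomain_rename] at h2
  exact h2

open MvPowerSeries in
/-- The guessed polynomial `P(T,t,x)` annihilates `F(t;x,0)`. -/
theorem kreweras_section_annihilating_polynomial :
    letI t : MvPowerSeries (Fin 2) ℚ := X 0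
    letI x : MvPowerSeries (Fin 2) ℚ := X 1
    letI T : MvPowerSeries (Fin 2) ℚ := KrewerasGFx0
    (16 * x ^ 3 * t ^ 4 + 108 * t ^ 4 - 72 * x * t ^ 3 + 8 * x ^ 2 * t ^ 2 - 2 * t + x)
      + (96 * x ^ 2 * t ^ 5 - 48 * x ^ 3 * t ^ 4 - 144 * t ^ 4 + 104 * x * t ^ 3
          - 16 * x ^ 2 * t ^ 2 + 2 * t - x) * T
      + (48 * x ^ 4 * t ^ 6 + 192 * x * t ^ 6 - 264 * x ^ 2 * t ^ 5 + 64 * x ^ 3 * t ^ 4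
          + 32 * t ^ 4 - 32 * x * t ^ 3 + 9 * x ^ 2 * t ^ 2) * T ^ 2
      + (192 * x ^ 3 * t ^ 7 + 128 * t ^ 7 - 96 * x ^ 4 * t ^ 6 - 192 * x * t ^ 6
          + 128 * x ^ 2 * t ^ 5 - 32 * x ^ 3 * t ^ 4) * T ^ 3
      + (48 * x ^ 5 * t ^ 8 + 192 * x ^ 2 * t ^ 8 - 192 * x ^ 3 * t ^ 7
          + 56 * x ^ 4 * t ^ 6) * T ^ 4
      + (96 * x ^ 4 * t ^ 9 - 48 * x ^ 5 * t ^ 8) * T ^ 5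
      + 16 * x ^ 6 * t ^ 10 * T ^ 6 = 0 := by
  obtain ⟨g, hg, hP⟩ := exists_section
  have hT : iterEquiv KrewerasGFx0 = g := by
    ext i n
    rw [coeff_coeff_iterEquiv, hg]
    change ((f ((Finsupp.single 0 n + Finsupp.single 1 i : Fin 2 →₀ ℕ) 0)
      (((Finsupp.single 0 n + Finsupp.single 1 i : Fin 2 →₀ ℕ) 1 : ℕ) : ℤ) 0 : ℕ) : ℚ) = _
    simp
  apply iterEquiv.injective
  rw [map_zero, ← hP, ← hT, ← iterEquiv_X_zero, ← iterEquiv_X_one]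
  exact map_annihilator (RingHomClass.toRingHom iterEquiv) _ _ _
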